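/- arXiv:2402.08484 — 2 statements merged into one kernel-verified Lean document; each statement's English description precedes it below -/
import Mathlib

section
/- For every integer n ≥ 1, let ℝ^n_π := {x ∈ ℝ^n : x_{π(1)} ≤ x_{π(2)} ≤ … ≤ x_{π(n)}} for each permutation π of {1,…,n}, and extend φ^{-1} to all of ℝ^n by setting φ^{-1}(x)_{π(k)} := 1 − x_{π(1)} − … − x_{π(k−1)} − (n − k + 1)·x_{π(k)} for x ∈ ℝ^n_π. Then this extension is well-defined and n²-Lipschitz with respect to the L1 norm: ‖φ^{-1}(x) − φ^{-1}(y)‖₁ ≤ n²·‖x − y‖₁ for all x, y ∈ ℝ^n. -/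
/-!
On every region `ℝⁿ_π` the piecewise formula equals the single expression
`1 - ∑ j, min (x j) (x i)`: for `i = π k`, the entries before position `k` in the sorted order
contribute themselves to the sum, and the remaining `n - k` entries contribute `x (π k)` each
(`sum_min_eq`). This settles well-definedness. As `min` is 1-Lipschitz for the sup norm, each of
the `n²` terms `min (x j) (x i)` changes by at most
`max |x j - y j| |x i - y i| ≤ ‖x - y‖₁`, which gives the constant `n²`.
-/

/-- The values of `x` read in the order given by the permutation `π` (0-based), extended by
`0` beyond index `n`. -/
def seqOf {n : ℕ} (π : Equiv.Perm (Fin n)) (x : Fin n → ℝ) : ℕ → ℝ :=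
  fun j => if h : j < n then x (π ⟨j, h⟩) else 0

/-- The defining formula for `φ⁻¹(x)_{π(k)}` on `ℝⁿ_π` (with `k` 0-based):
`φ⁻¹(x)_{π(k)} = 1 - x_{π(1)} - ⋯ - x_{π(k-1)} - (n - k + 1)·x_{π(k)}`. -/
noncomputable def psiFormula {n : ℕ} (π : Equiv.Perm (Fin n)) (x : Fin n → ℝ) (k : Fin n) : ℝ :=
  1 - (∑ j ∈ Finset.range k.val, seqOf π x j) - ((n : ℝ) - k.val) * seqOf π x k.val

theorem seqOf_mono {n : ℕ} {π : Equiv.Perm (Fin n)} {x : Fin n → ℝ}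
    (h : ∀ j, j + 1 < n → seqOf π x j ≤ seqOf π x (j + 1)) {a b : ℕ} (hab : a ≤ b) (hb : b < n) :
    seqOf π x a ≤ seqOf π x b := by
  induction b, hab using Nat.le_induction with
  | base => exact le_rfl
  | succ b _ ih => exact (ih (by omega)).trans (h b hb)

theorem sum_min_eq {n : ℕ} {π : Equiv.Perm (Fin n)} {x : Fin n → ℝ}
    (h : ∀ j, j + 1 < n → seqOf π x j ≤ seqOf π x (j + 1)) (k : Fin n) :
    ∑ j, min (x j) (x (π k)) =
      (∑ j ∈ Finset.range k.val, seqOf π x j) + ((n : ℝ) - k.val) * seqOf π x k.val := by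
  have hseq : ∀ j : Fin n, seqOf π x j.val = x (π j) := fun j => by simp [seqOf]
  have hreindex : ∑ j, min (x j) (x (π k)) =
      ∑ j ∈ Finset.range n, min (seqOf π x j) (seqOf π x k.val) := by
    rw [← Equiv.sum_comp π, Finset.sum_range]
    simp only [hseq]
  rw [hreindex, ← Finset.sum_range_add_sum_Ico _ k.isLt.le]
  congr 1
  · refine Finset.sum_congr rfl fun j hj => min_eq_left ?_
    exact seqOf_mono h (Finset.mem_range.mp hj).le k.isLt
  · have hconst : ∀ j ∈ Finset.Ico k.val n,
        min (seqOf π x j) (seqOf π x k.val) = seqOf π x k.val := fun j hj =>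
      min_eq_right (seqOf_mono h (Finset.mem_Ico.mp hj).1 (Finset.mem_Ico.mp hj).2)
    rw [Finset.sum_congr rfl hconst, Finset.sum_const, Nat.card_Ico, nsmul_eq_mul,
      Nat.cast_sub k.isLt.le]

/-- The extension of `φ⁻¹` to all of `ℝⁿ` by the piecewise formula on each region
`ℝⁿ_π = {x : x_{π(1)} ≤ ⋯ ≤ x_{π(n)}}` is well-defined and `n²`-Lipschitz for the `L¹` norm. -/
theorem psi_extension_lipschitz (n : ℕ) (hn : 1 ≤ n) :
    ∃ ψ : (Fin n → ℝ) → (Fin n → ℝ),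
      (∀ (π : Equiv.Perm (Fin n)) (x : Fin n → ℝ),
        (∀ j, j + 1 < n → seqOf π x j ≤ seqOf π x (j + 1)) →
        ∀ k : Fin n, ψ x (π k) = psiFormula π x k) ∧
      ∀ x y : Fin n → ℝ,
        ∑ i : Fin n, |ψ x i - ψ y i| ≤ (n : ℝ) ^ 2 * ∑ i : Fin n, |x i - y i| := by
  refine ⟨fun x i => 1 - ∑ j, min (x j) (x i), fun π x h k => ?_, fun x y => ?_⟩
  · simp only [psiFormula, sum_min_eq h k]
    ring
  · set S := ∑ i, |x i - y i| with hS
    have hle : ∀ i, |x i - y i| ≤ S := fun i =>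
      Finset.single_le_sum (f := fun i => |x i - y i|) (fun _ _ => abs_nonneg _)
        (Finset.mem_univ i)
    have hrow : ∀ i, |(1 - ∑ j, min (x j) (x i)) - (1 - ∑ j, min (y j) (y i))| ≤ n * S := by
      intro i
      rw [sub_sub_sub_cancel_left, abs_sub_comm, ← Finset.sum_sub_distrib]
      refine (Finset.abs_sum_le_sum_abs _ _).trans ?_
      refine (Finset.sum_le_card_nsmul _ _ S fun j _ => ?_).trans_eq (by simp)
      exact (abs_min_sub_min_le_max _ _ _ _).trans (max_le (hle j) (hle i))
    refine (Finset.sum_le_card_nsmul _ _ _ fun i _ => hrow i).trans_eq ?_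
    simp only [Finset.card_univ, Fintype.card_fin, nsmul_eq_mul]
    ring
end

section
/- Let n ≥ 1 and let (C_1,…,C_n) be a sparse KKM covering of Δ_{n−1}. Then the sets P_j := φ^{-1}(C_j ∩ Δ_{n−1}), j ∈ {1,…,n}, satisfy Gale's assumptions on preference sets: each P_j is closed, p ∉ P_j whenever p_j ≥ 1, and Σ_n ⊆ ∪_{j=1}^n P_j. -/
/-!
The map of the statement has a description that does not mention permutations: on the simplex,
`ψ x i = 1 - ∑ j, min (x j) (x i)`, because after sorting the terms below `x i` contribute themselves
and the remaining ones contribute `x i` each (`psi_eq_gale`). This map is continuous, so images of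
the compact sets `C j ∩ Δ` are closed. If `ψ x j ≥ 1`, then all `min (x k) (x j)` vanish; in particular
`x j = 0`, so `x` lies on the face opposite `j`, which sparsity forbids for `x ∈ C j`.

For the covering of `Σ_n`, it suffices that `ψ` maps the simplex onto `Σ_n`, since the simplex is covered
by the `C j`. Surjectivity amounts to solving `∑ j, min (x j) (x i) = 1 - p i` with `x ≥ 0`. This is done
by splitting off an index with the smallest right-hand side `q`: there `x` equals `q / n`, and the
problem for the other indices reduces to the same one with `q` subtracted (`exists_sum_min_eq`).
-/

/-- `Σ_n`: the set of price vectors `p` with `0 ≤ p_i ≤ 1` for all `i` and `p_j = 0` for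
some `j`. -/
def SigmaN (n : ℕ) : Set (Fin n → ℝ) :=
  {p | (∀ i, 0 ≤ p i ∧ p i ≤ 1) ∧ ∃ j, p j = 0}

/-- `Δ_π = {x ∈ Δ_{n-1} : x_{π(1)} ≤ x_{π(2)} ≤ ⋯ ≤ x_{π(n)}}`. -/
def DeltaPerm {n : ℕ} (π : Equiv.Perm (Fin n)) : Set (Fin n → ℝ) :=
  {x | x ∈ stdSimplex ℝ (Fin n) ∧ ∀ j, j + 1 < n → seqOf π x j ≤ seqOf π x (j + 1)}

/-- The face of the standard simplex spanned by the basis vectors indexed by `S`. -/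
def faceOf {n : ℕ} (S : Finset (Fin n)) : Set (Fin n → ℝ) :=
  convexHull ℝ {x | ∃ i ∈ S, x = Pi.single i (1 : ℝ)}

/-- A KKM covering of the standard simplex: a family of closed sets such that every face
`F_S` is covered by the sets indexed by `S`. -/
def IsKKMCovering {n : ℕ} (C : Fin n → Set (Fin n → ℝ)) : Prop :=
  (∀ i, IsClosed (C i)) ∧
    ∀ S : Finset (Fin n), S.Nonempty → faceOf S ⊆ ⋃ i ∈ S, C i

/-- A KKM covering is sparse if `C i` is disjoint from the face opposite vertex `i`. -/
def IsSparse {n : ℕ} (C : Fin n → Set (Fin n → ℝ)) : Prop :=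
  ∀ i, C i ∩ faceOf (Finset.univ.erase i) = ∅

/-- The permutation-free form of the map `φ⁻¹`. -/
def galeMap {n : ℕ} (x : Fin n → ℝ) (i : Fin n) : ℝ :=
  1 - ∑ j, min (x j) (x i)

lemma continuous_galeMap {n : ℕ} : Continuous (galeMap (n := n)) := by
  unfold galeMap
  fun_prop

lemma psiFormula_eq_galeMap {n : ℕ} (π : Equiv.Perm (Fin n)) (x : Fin n → ℝ)
    (hmono : Monotone (x ∘ π)) (k : Fin n) : psiFormula π x k = galeMap x (π k) := by
  have hk : seqOf π x k.val = x (π k) := by simp [seqOf]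
  have hsum : ∑ j, min (x j) (x (π k))
      = ∑ j ∈ Finset.range n, min (seqOf π x j) (x (π k)) := by
    rw [← Equiv.sum_comp π, Finset.sum_range]
    refine Finset.sum_congr rfl fun j _ => ?_
    simp [seqOf]
  have hlow : ∑ j ∈ Finset.range k.val, min (seqOf π x j) (x (π k))
      = ∑ j ∈ Finset.range k.val, seqOf π x j := by
    refine Finset.sum_congr rfl fun j hj => min_eq_left ?_
    have hjk : j < k.val := Finset.mem_range.mp hj
    have hjn : j < n := hjk.trans k.isLt
    have h : (⟨j, hjn⟩ : Fin n) ≤ k := hjk.le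
    simpa [seqOf, hjn] using hmono h
  have hhigh : ∑ j ∈ Finset.Ico k.val n, min (seqOf π x j) (x (π k))
      = ((n : ℝ) - k.val) * x (π k) := by
    have hconst : ∀ j ∈ Finset.Ico k.val n, min (seqOf π x j) (x (π k)) = x (π k) := by
      intro j hj
      obtain ⟨hkj, hjn⟩ := Finset.mem_Ico.mp hj
      have h : k ≤ (⟨j, hjn⟩ : Fin n) := hkj
      refine min_eq_right ?_
      simpa [seqOf, hjn] using hmono h
    rw [Finset.sum_congr rfl hconst, Finset.sum_const, Nat.card_Ico, nsmul_eq_mul,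
      Nat.cast_sub k.isLt.le]
  rw [psiFormula, galeMap, hsum, ← Finset.sum_range_add_sum_Ico _ k.isLt.le, hlow, hhigh, hk]
  ring

lemma psi_eq_gale {n : ℕ} (ψ : (Fin n → ℝ) → (Fin n → ℝ))
    (hψ : ∀ π : Equiv.Perm (Fin n), ∀ x ∈ DeltaPerm π, ∀ k : Fin n,
      ψ x (π k) = psiFormula π x k)
    (x : Fin n → ℝ) (hx : x ∈ stdSimplex ℝ (Fin n)) : ψ x = galeMap x := by
  have hmono : Monotone (x ∘ Tuple.sort x) := Tuple.monotone_sort x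
  have hmem : x ∈ DeltaPerm (Tuple.sort x) := by
    refine ⟨hx, fun j hj => ?_⟩
    have hj' : j < n := by omega
    have h : (⟨j, hj'⟩ : Fin n) ≤ ⟨j + 1, hj⟩ := Nat.le_succ j
    simpa [seqOf, hj, hj'] using hmono h
  funext i
  obtain ⟨k, rfl⟩ := (Tuple.sort x).surjective i
  rw [hψ _ x hmem k, psiFormula_eq_galeMap _ x hmono]

lemma mem_faceOf {n : ℕ} (S : Finset (Fin n)) (x : Fin n → ℝ)
    (hx : x ∈ stdSimplex ℝ (Fin n)) (hS : ∀ i ∉ S, x i = 0) : x ∈ faceOf S := by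
  have hsum : ∑ i ∈ S, x i = 1 := by
    rw [← hx.2]
    exact Finset.sum_subset (Finset.subset_univ S) fun i _ hi => hS i hi
  have hcomb : ∑ i ∈ S, x i • (Pi.single i (1 : ℝ) : Fin n → ℝ) = x := by
    funext k
    by_cases hk : k ∈ S
    · simp [Finset.sum_apply, Pi.single_apply, hk]
    · simp [Finset.sum_apply, Pi.single_apply, hk, hS k hk]
  rw [← hcomb]
  exact (convex_convexHull ℝ _).sum_mem (fun i _ => hx.1 i) hsum
    fun i hi => subset_convexHull ℝ _ ⟨i, hi, rfl⟩

/-- Solvability of the min-sum equations; the shift `c` carries the amounts already subtracted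
in the induction that peels off indices with the smallest value of `q`. -/
lemma exists_sum_min_eq {ι : Type*} [DecidableEq ι] (q : ι → ℝ) (s : Finset ι) :
    ∀ c : ℝ, (∀ i ∈ s, c ≤ q i) →
      ∃ x : ι → ℝ, (∀ i, 0 ≤ x i) ∧ ∀ i ∈ s, ∑ j ∈ s, min (x j) (x i) = q i - c := by
  induction s using Finset.induction_on_min_value q with
  | empty => exact fun _ _ => ⟨0, by simp, by simp⟩
  | insert m s hm hmin ih =>
    intro c hc
    obtain ⟨y, hy0, hy⟩ := ih (q m) hmin
    have hcm : c ≤ q m := hc m (Finset.mem_insert_self m s)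
    have hpos : (0 : ℝ) < s.card + 1 := by positivity
    -- All `s.card + 1` terms in the equation at `m` have to be equal to `x m`.
    obtain ⟨t, ht⟩ : ∃ t : ℝ, t = (q m - c) / (s.card + 1) := ⟨_, rfl⟩
    have ht0 : 0 ≤ t := by rw [ht]; exact div_nonneg (by linarith) hpos.le
    have htm : (s.card : ℝ) * t + t = q m - c := by rw [ht]; field_simp
    have hne : ∀ i ∈ s, i ≠ m := fun i hi h => hm (h ▸ hi)
    refine ⟨fun i => if i = m then t else y i + t, fun i => ?_, fun i hi => ?_⟩
    · have := hy0 i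
      dsimp only
      split_ifs <;> linarith
    · beta_reduce
      rw [Finset.sum_insert hm]
      rcases Finset.mem_insert.mp hi with rfl | his
      · have hterm : ∀ j ∈ s, min (if j = i then t else y j + t) (if i = i then t else y i + t)
            = t := by
          intro j hj
          have := hy0 j
          rw [if_neg (hne j hj), if_pos rfl]
          exact min_eq_right (by linarith)
        rw [Finset.sum_congr rfl hterm, Finset.sum_const, nsmul_eq_mul, if_pos rfl, min_self]
        linarith
      · have hterm : ∀ j ∈ s, min (if j = m then t else y j + t) (if i = m then t else y i + t)
            = min (y j) (y i) + t := by
          intro j hj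
          rw [if_neg (hne j hj), if_neg (hne i his), min_add_add_right]
        have := hy0 i
        rw [Finset.sum_congr rfl hterm, Finset.sum_add_distrib, hy i his, Finset.sum_const,
          nsmul_eq_mul, if_pos rfl, if_neg (hne i his), min_eq_left (by linarith)]
        linarith

lemma exists_galeMap_eq {n : ℕ} (p : Fin n → ℝ) (hp : p ∈ SigmaN n) :
    ∃ x ∈ stdSimplex ℝ (Fin n), galeMap x = p := by
  obtain ⟨hp01, j₀, hj₀⟩ := hp
  obtain ⟨x, hx0, hx⟩ := exists_sum_min_eq (fun i => 1 - p i) Finset.univ 0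
    fun i _ => by linarith [(hp01 i).2]
  refine ⟨x, ⟨hx0, le_antisymm ?_ ?_⟩, ?_⟩
  -- At an index where `x` is maximal, the equation reads `∑ j, x j = 1 - p i`.
  · obtain ⟨i, _, hi⟩ := Finset.exists_max_image Finset.univ x ⟨j₀, Finset.mem_univ _⟩
    have h := hx i (Finset.mem_univ i)
    rw [Finset.sum_congr rfl fun j hj => min_eq_left (hi j hj)] at h
    linarith [(hp01 i).1]
  · have h := hx j₀ (Finset.mem_univ j₀)
    have hle : ∑ j, min (x j) (x j₀) ≤ ∑ j, x j :=
      Finset.sum_le_sum fun j _ => min_le_left _ _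
    linarith
  · funext i
    rw [galeMap, hx i (Finset.mem_univ i)]
    ring

/-- If `(C_1, …, C_n)` is a sparse KKM covering of the standard simplex, then the sets
`P_j := φ⁻¹(C_j ∩ Δ_{n-1})` satisfy Gale's assumptions on preference sets: each `P_j` is
closed, `p ∉ P_j` whenever `p_j ≥ 1`, and `Σ_n ⊆ ∪_j P_j`. -/
theorem sparse_kkm_to_preference_sets (n : ℕ) (hn : 1 ≤ n)
    (ψ : (Fin n → ℝ) → (Fin n → ℝ))
    (hψ : ∀ π : Equiv.Perm (Fin n), ∀ x ∈ DeltaPerm π, ∀ k : Fin n,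
      ψ x (π k) = psiFormula π x k)
    (C : Fin n → Set (Fin n → ℝ))
    (hC : IsKKMCovering C) (hsparse : IsSparse C) :
    (∀ j, IsClosed (ψ '' (C j ∩ stdSimplex ℝ (Fin n)))) ∧
      (∀ j (p : Fin n → ℝ), 1 ≤ p j → p ∉ ψ '' (C j ∩ stdSimplex ℝ (Fin n))) ∧
      SigmaN n ⊆ ⋃ j, ψ '' (C j ∩ stdSimplex ℝ (Fin n)) := by
  refine ⟨fun j => ?_, fun j p hp => ?_, fun p hp => ?_⟩
  · have himage : ψ '' (C j ∩ stdSimplex ℝ (Fin n)) = galeMap '' (C j ∩ stdSimplex ℝ (Fin n)) :=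
      Set.image_congr fun x hx => psi_eq_gale ψ hψ x hx.2
    rw [himage]
    exact (((isCompact_stdSimplex ℝ (Fin n)).inter_left (hC.1 j)).image
      continuous_galeMap).isClosed
  · rintro ⟨x, ⟨hxC, hx⟩, rfl⟩
    rw [psi_eq_gale ψ hψ x hx, galeMap] at hp
    have hle : min (x j) (x j) ≤ ∑ k, min (x k) (x j) :=
      Finset.single_le_sum (f := fun k => min (x k) (x j))
        (fun k _ => le_min (hx.1 k) (hx.1 j)) (Finset.mem_univ j)
    rw [min_self] at hle
    have hxj : x j = 0 := le_antisymm (by linarith) (hx.1 j)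
    have hface : x ∈ faceOf (Finset.univ.erase j) := by
      refine mem_faceOf _ x hx fun i hi => ?_
      obtain rfl : i = j := by simpa using hi
      exact hxj
    have hmem : x ∈ C j ∩ faceOf (Finset.univ.erase j) := ⟨hxC, hface⟩
    rw [hsparse j] at hmem
    exact hmem
  · obtain ⟨x, hx, rfl⟩ := exists_galeMap_eq p hp
    have hcover := hC.2 Finset.univ ⟨⟨0, hn⟩, Finset.mem_univ _⟩
      (mem_faceOf Finset.univ x hx fun i hi => absurd (Finset.mem_univ i) hi)
    obtain ⟨j, _, hj⟩ := Set.mem_iUnion₂.mp hcover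
    exact Set.mem_iUnion.mpr ⟨j, x, ⟨hj, hx⟩, psi_eq_gale ψ hψ x hx⟩
end
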